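/- Two-valued parameter, symmetric moment condition: let f_0, f_1 be probability densities on (𝒴, ν) such that the likelihood ratio f_{1−m}(Y)/f_m(Y) has variance at most σ² < ∞ when Y has density f_m, for both m = 0 and m = 1. Then there exists a constant C depending only on σ² (not on n) such that for every n and every μ_{1:n} ∈ {0,1}ⁿ, E Σ_{i=1}^n (E(M_i | Y_i) − E(M_i | Y_{1:n}))² ≤ C, i.e. E‖Δ^S − Δ^{PI}‖² = O(1). -/

import Mathlib

/-!
The bound holds with `C = 2`, by an exchangeability argument that never expands the full posterior.

Let `n₁`, `n₀` count the parameters equal to `1` and `0`, and let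
`s(y) = n₁ f₁(y) / (n₁ f₁(y) + n₀ f₀(y))` and `t = 1 - s`, so that Bayes' rule reads
`n₁ f₁ t = n₀ f₀ s`. In particular `H := n₁ E₁ t = n₀ E₀ s`, where `E_m` is expectation under `f_m`.

Since `s(Y_i)` is a function of `Y_i`, Pythagoras (`integral_condExp_sub_condExp_sq_le`) gives
`E (E(M_i | Y_i) - E(M_i | Y))² ≤ E (E(s(Y_i) - M_i | Y))²`, so it is enough to bound the sum of
the right-hand sides by `2`.

Exchange identity (`condExp_exch`): given `Y`, composing the permutation with the transposition of
`i` and `j` multiplies its weight by a likelihood ratio, and Bayes' rule at `Y_i` and `Y_j` yields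
`E[s(Y_i) t(Y_j) 1{M_i = 0, M_j = 1} | Y] = E[t(Y_i) s(Y_j) 1{M_i = 1, M_j = 0} | Y]`.
Summing over `j`, one finds that `H · E(s(Y_i) - M_i | Y) = E(W_i | Y)`, where
`W_i = s(Y_i) (1 - M_i) (H - ∑ M_j t(Y_j)) - t(Y_i) M_i (H - ∑ (1 - M_j) s(Y_j))`.

Given the permutation, at most one of the two terms of `W_i` survives, and its bracket is a centred
sum of independent `[0,1]`-valued variables, independent of `Y_i`, with variance at most `H`
(`integral_sq_mul_centred_sum_le`). Therefore `∑ E W_i² ≤ n₀ (E₀ s) H + n₁ (E₁ t) H = 2 H²`.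
As conditional expectation contracts `L²`, dividing by `H²` gives the bound. If `H = 0`, then
`s(Y_i) = M_i` almost surely and the sum vanishes (`sum_integral_condExp_sq_le`).
-/

open MeasureTheory ProbabilityTheory ENNReal

noncomputable section

instance (n : ℕ) : MeasurableSpace (Equiv.Perm (Fin n)) := ⊤

/-- product measure on `Fin n → 𝓨` with `i`-th coordinate having density `f i` w.r.t. `ν`. -/
def prodDens {𝓨 : Type*} [MeasurableSpace 𝓨] (ν : Measure 𝓨) {n : ℕ}
    (f : Fin n → 𝓨 → ℝ) : Measure (Fin n → 𝓨) :=
  Measure.pi fun i => ν.withDensity fun y => ENNReal.ofReal (f i y)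

/-- the random-permutation Bayesian model: `π` uniform on permutations; given `π`,
the observations are independent with `Y i ∼ f (π i)`. -/
def bayesP {𝓨 : Type*} [MeasurableSpace 𝓨] (ν : Measure 𝓨) {n : ℕ}
    (f : Fin n → 𝓨 → ℝ) : Measure (Equiv.Perm (Fin n) × (Fin n → 𝓨)) :=
  ((Nat.factorial n : ℝ≥0∞))⁻¹ •
    ∑ π : Equiv.Perm (Fin n), (Measure.dirac π).prod (prodDens ν fun i => f (π i))

/-- `M i = μ_{π(i)}` -/
def Mpar {𝓨 : Type*} {n : ℕ} (μs : Fin n → ℝ) (i : Fin n)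
    (ω : Equiv.Perm (Fin n) × (Fin n → 𝓨)) : ℝ := μs (ω.1 i)

/-- the σ-algebra generated by `Y = (Y_1, …, Y_n)` -/
def sigmaY (𝓨 : Type*) [MeasurableSpace 𝓨] (n : ℕ) :
    MeasurableSpace (Equiv.Perm (Fin n) × (Fin n → 𝓨)) :=
  MeasurableSpace.comap Prod.snd inferInstance

/-- the σ-algebra generated by `Y_i` alone -/
def sigmaYi (𝓨 : Type*) [MeasurableSpace 𝓨] {n : ℕ} (i : Fin n) :
    MeasurableSpace (Equiv.Perm (Fin n) × (Fin n → 𝓨)) :=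
  MeasurableSpace.comap (fun ω => ω.2 i) inferInstance

/-- the oracle simple symmetric rule `δ^S(y) = Σ_j μ_j f_j(y) / Σ_j f_j(y)` -/
def deltaS {𝓨 : Type*} {n : ℕ} (μs : Fin n → ℝ) (f : Fin n → 𝓨 → ℝ) (y : 𝓨) : ℝ :=
  (∑ j, μs j * f j y) / (∑ j, f j y)

/-! ### Bounded measurable functions -/

/-- A measurable real function with a uniform bound.  The class is closed under ring operations,
and its members are in every `Lᵖ` of a finite measure, which settles the integrability questions. -/
def BddMeas {Ω : Type*} [MeasurableSpace Ω] (F : Ω → ℝ) : Prop :=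
  Measurable F ∧ ∃ C, ∀ ω, |F ω| ≤ C

section BddMeas

variable {Ω : Type*} [MeasurableSpace Ω] {F G : Ω → ℝ}

lemma BddMeas.of_mem_Icc (hF : Measurable F) (h : ∀ ω, F ω ∈ Set.Icc (0 : ℝ) 1) : BddMeas F :=
  ⟨hF, 1, fun ω => abs_le.2 ⟨by linarith [(h ω).1], (h ω).2⟩⟩

lemma BddMeas.const (c : ℝ) : BddMeas (fun _ : Ω => c) := ⟨measurable_const, |c|, fun _ => le_rfl⟩

lemma BddMeas.sub (hF : BddMeas F) (hG : BddMeas G) : BddMeas (fun ω => F ω - G ω) := by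
  obtain ⟨hF, C, hC⟩ := hF
  obtain ⟨hG, D, hD⟩ := hG
  exact ⟨hF.sub hG, C + D, fun ω => (abs_sub _ _).trans (add_le_add (hC ω) (hD ω))⟩

lemma BddMeas.mul (hF : BddMeas F) (hG : BddMeas G) : BddMeas (fun ω => F ω * G ω) := by
  obtain ⟨hF, C, hC⟩ := hF
  obtain ⟨hG, D, hD⟩ := hG
  refine ⟨hF.mul hG, C * D, fun ω => ?_⟩
  rw [abs_mul]
  exact mul_le_mul (hC ω) (hD ω) (abs_nonneg _) ((abs_nonneg _).trans (hC ω))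

lemma BddMeas.sq (hF : BddMeas F) : BddMeas (fun ω => F ω ^ 2) := by
  simpa only [pow_two] using hF.mul hF

lemma BddMeas.sum {ι : Type*} {F : ι → Ω → ℝ} (s : Finset ι) (hF : ∀ i, BddMeas (F i)) :
    BddMeas (fun ω => ∑ i ∈ s, F i ω) := by
  choose hm C hC using hF
  exact ⟨Finset.measurable_fun_sum s fun i _ => hm i, ∑ i ∈ s, C i, fun ω =>
    (Finset.abs_sum_le_sum_abs _ _).trans (Finset.sum_le_sum fun i _ => hC i ω)⟩

lemma BddMeas.comp {Ω' : Type*} [MeasurableSpace Ω'] {φ : Ω' → Ω} (hF : BddMeas F)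
    (hφ : Measurable φ) : BddMeas (fun ω => F (φ ω)) :=
  ⟨hF.1.comp hφ, hF.2.imp fun _ h ω => h (φ ω)⟩

lemma BddMeas.indicator {S : Set Ω} (hF : BddMeas F) (hS : MeasurableSet S) :
    BddMeas (S.indicator F) := by
  obtain ⟨hF, C, hC⟩ := hF
  refine ⟨hF.indicator hS, C, fun ω => ?_⟩
  by_cases h : ω ∈ S
  · simpa [h] using hC ω
  · simpa [h] using (abs_nonneg _).trans (hC ω)

lemma BddMeas.memLp {P : Measure Ω} [IsFiniteMeasure P] {p : ℝ≥0∞} (hF : BddMeas F) :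
    MemLp F p P := by
  obtain ⟨hF, C, hC⟩ := hF
  exact MemLp.of_bound hF.aestronglyMeasurable C (ae_of_all _ hC)

lemma BddMeas.integrable {P : Measure Ω} [IsFiniteMeasure P] (hF : BddMeas F) :
    Integrable F P := memLp_one_iff_integrable.1 hF.memLp

end BddMeas

/-! ### Conditional expectation in `L²` -/

/-- Pythagoras for the conditional expectation. -/
lemma integral_sub_condExp_sq {Ω : Type*} {m m0 : MeasurableSpace Ω} (hm : m ≤ m0)
    {P : Measure Ω} [IsFiniteMeasure P] {X : Ω → ℝ} (hX : MemLp X 2 P) :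
    ∫ ω, (X ω - (P[X|m]) ω) ^ 2 ∂P = ∫ ω, X ω ^ 2 ∂P - ∫ ω, (P[X|m]) ω ^ 2 ∂P := by
  have hc : MemLp (P[X|m]) 2 P := hX.condExp (by norm_num)
  have h1 : ∫ ω, (Var[X; P | m]) ω ∂P = ∫ ω, (X ω - (P[X|m]) ω) ^ 2 ∂P := by
    rw [condVar, integral_condExp hm]
    rfl
  have h2 : ∫ ω, (Var[X; P | m]) ω ∂P = ∫ ω, ((P[X ^ 2|m]) ω - (P[X|m]) ω ^ 2) ∂P :=
    integral_congr_ae (condVar_ae_eq_condExp_sq_sub_sq_condExp hm hX)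
  rw [← h1, h2, integral_sub integrable_condExp hc.integrable_sq, integral_condExp hm]
  rfl

/-- Projections commute: passing from the finer `σ`-algebra `m₂` to the coarser `m₁`, where `s` is
`m₁`-measurable, the error of predicting `M` is controlled by how far `s` is from being the
`m₂`-conditional expectation of `M`. -/
lemma integral_condExp_sub_condExp_sq_le {Ω : Type*} {m1 m2 m0 : MeasurableSpace Ω}
    (h12 : m1 ≤ m2) (h2 : m2 ≤ m0) {P : Measure Ω} [IsFiniteMeasure P] {s M : Ω → ℝ}
    (hs : StronglyMeasurable[m1] s) (hs2 : MemLp s 2 P) (hM2 : MemLp M 2 P) :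
    ∫ ω, ((P[M|m1]) ω - (P[M|m2]) ω) ^ 2 ∂P ≤ ∫ ω, (P[fun ω => s ω - M ω|m2]) ω ^ 2 ∂P := by
  have hsi : Integrable s P := hs2.integrable (by norm_num)
  have hMi : Integrable M P := hM2.integrable (by norm_num)
  set q := P[s - M|m2] with hq
  have hq2 : MemLp q 2 P := (hs2.sub hM2).condExp (by norm_num)
  have e2 : q =ᵐ[P] s - P[M|m2] := by
    have := condExp_sub (m := m2) hsi hMi
    rwa [condExp_of_stronglyMeasurable h2 (hs.mono h12) hsi] at this
  have e1 : P[q|m1] =ᵐ[P] s - P[M|m1] := by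
    have := condExp_sub (m := m1) hsi hMi
    rw [condExp_of_stronglyMeasurable (h12.trans h2) hs hsi] at this
    exact (condExp_condExp_of_le h12 h2).trans this
  have key := integral_sub_condExp_sq (h12.trans h2) hq2
  have hnn : 0 ≤ ∫ ω, (P[q|m1]) ω ^ 2 ∂P := integral_nonneg fun _ => sq_nonneg _
  have e3 : ∫ ω, ((P[M|m1]) ω - (P[M|m2]) ω) ^ 2 ∂P = ∫ ω, (q ω - (P[q|m1]) ω) ^ 2 ∂P := by
    refine integral_congr_ae ?_
    filter_upwards [e1, e2] with ω h1 h2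
    simp only [h1, h2, Pi.sub_apply]
    ring
  have e4 : ∫ ω, (P[fun ω => s ω - M ω|m2]) ω ^ 2 ∂P = ∫ ω, q ω ^ 2 ∂P := rfl
  rw [e3, e4]
  linarith

/-! ### Product densities -/

/-- Tonelli for a product of nonnegative integrable densities. -/
lemma lintegral_ofReal_prod {ι 𝓨 : Type*} [Fintype ι] [MeasurableSpace 𝓨] (ν : Measure 𝓨)
    [SigmaFinite ν] (g : ι → 𝓨 → ℝ) (hg : ∀ i, Integrable (g i) ν) (h0 : ∀ i y, 0 ≤ g i y) :
    ∫⁻ y, ENNReal.ofReal (∏ i, g i (y i)) ∂(Measure.pi fun _ : ι => ν)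
      = ∏ i, ∫⁻ y, ENNReal.ofReal (g i y) ∂ν := by
  rw [← ofReal_integral_eq_lintegral_ofReal (Integrable.fintype_prod hg)
    (ae_of_all _ fun y => Finset.prod_nonneg fun i _ => h0 i _),
    integral_fintype_prod_eq_prod,
    ENNReal.ofReal_prod_of_nonneg fun i _ => integral_nonneg (h0 i)]
  exact Finset.prod_congr rfl fun i _ =>
    ofReal_integral_eq_lintegral_ofReal (hg i) (ae_of_all _ (h0 i))

lemma isProbabilityMeasure_dens {𝓨 : Type*} [MeasurableSpace 𝓨] {ν : Measure 𝓨} {f : 𝓨 → ℝ}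
    (h : ∫⁻ y, ENNReal.ofReal (f y) ∂ν = 1) :
    IsProbabilityMeasure (ν.withDensity fun y => ENNReal.ofReal (f y)) :=
  ⟨by rw [withDensity_apply _ MeasurableSet.univ, Measure.restrict_univ, h]⟩

lemma prodDens_eq_withDensity {𝓨 : Type*} [MeasurableSpace 𝓨] (ν : Measure 𝓨) [SigmaFinite ν]
    {n : ℕ} (f : Fin n → 𝓨 → ℝ) (hm : ∀ i, Measurable (f i)) (h0 : ∀ i y, 0 ≤ f i y)
    (h1 : ∀ i, ∫⁻ y, ENNReal.ofReal (f i y) ∂ν = 1) :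
    prodDens ν f =
      (Measure.pi fun _ => ν).withDensity fun y => ENNReal.ofReal (∏ i, f i (y i)) := by
  have := fun i => isProbabilityMeasure_dens (h1 i)
  have hint : ∀ i, Integrable (f i) ν := fun i =>
    ⟨(hm i).aestronglyMeasurable, by
      rw [hasFiniteIntegral_iff_ofReal (ae_of_all _ (h0 i)), h1 i]; exact ENNReal.one_lt_top⟩
  refine Measure.pi_eq fun s hs => ?_
  have hbox : MeasurableSet (Set.univ.pi s) := MeasurableSet.univ_pi hs
  rw [withDensity_apply _ hbox, ← lintegral_indicator hbox]
  have e : ∀ y : Fin n → 𝓨, (Set.univ.pi s).indicator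
      (fun y => ENNReal.ofReal (∏ i, f i (y i))) y
      = ENNReal.ofReal (∏ i, (s i).indicator (f i) (y i)) := by
    intro y
    by_cases hy : y ∈ Set.univ.pi s
    · rw [Set.indicator_of_mem hy]
      congr 1
      exact Finset.prod_congr rfl fun i _ => (Set.indicator_of_mem (hy i trivial) _).symm
    · rw [Set.indicator_of_notMem hy]
      simp only [Set.mem_univ_pi, not_forall] at hy
      obtain ⟨i, hi⟩ := hy
      rw [Finset.prod_eq_zero (Finset.mem_univ i) (Set.indicator_of_notMem hi _)]
      simp
  simp_rw [e]
  rw [lintegral_ofReal_prod ν (fun i => (s i).indicator (f i)) (fun i => (hint i).indicator (hs i))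
    fun i y => Set.indicator_nonneg (fun _ _ => h0 i _) y]
  refine Finset.prod_congr rfl fun i _ => ?_
  rw [withDensity_apply _ (hs i), ← lintegral_indicator (hs i)]
  refine lintegral_congr fun y => ?_
  by_cases hy : y ∈ s i <;> simp [hy]

/-- The variance bound: with independent coordinates, a `[0,1]`-valued function of coordinate `i`
times the squared centred sum of `[0,1]`-valued functions of other coordinates. -/
lemma integral_sq_mul_centred_sum_le {𝓨 : Type*} [MeasurableSpace 𝓨] {n : ℕ}
    (Q : Fin n → Measure 𝓨) [∀ i, IsProbabilityMeasure (Q i)] (u g : 𝓨 → ℝ)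
    (hu : Measurable u) (hg : Measurable g) (hu1 : ∀ y, u y ∈ Set.Icc (0 : ℝ) 1)
    (hg1 : ∀ y, g y ∈ Set.Icc (0 : ℝ) 1) (i : Fin n) (A : Finset (Fin n)) (hi : i ∉ A) (c : ℝ)
    (hc : ∀ j ∈ A, ∫ y, g y ∂(Q j) = c) :
    ∫ y, (u (y i) * (A.card * c - ∑ j ∈ A, g (y j))) ^ 2 ∂(Measure.pi Q)
      ≤ (∫ y, u y ∂(Q i)) * (A.card * c) := by
  have hub : BddMeas u := .of_mem_Icc hu hu1
  have hgb : BddMeas g := .of_mem_Icc hg hg1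
  have heg : ∀ j, BddMeas (fun y : Fin n → 𝓨 => g (y j)) := fun j => hgb.comp (measurable_pi_apply j)
  have hev : ∀ (w : 𝓨 → ℝ), Measurable w → ∀ j,
      ∫ y : Fin n → 𝓨, w (y j) ∂(Measure.pi Q) = ∫ y, w y ∂(Q j) := fun w hw j =>
    integral_comp_eval hw.aestronglyMeasurable
  -- `X j` is `g` of coordinate `j`, except that coordinate `i` carries `u`
  let x : Fin n → 𝓨 → ℝ := fun j => if j = i then u else g
  have hx : ∀ j, Measurable (x j) := fun j => by dsimp only [x]; split_ifs <;> assumption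
  let X : Fin n → (Fin n → 𝓨) → ℝ := fun j y => x j (y j)
  have hX : ∀ j, Measurable (X j) := fun j => (hx j).comp (measurable_pi_apply j)
  have hind : iIndepFun X (Measure.pi Q) := iIndepFun_pi fun j => (hx j).aemeasurable
  have hXj : ∀ j ∈ A, X j = fun y => g (y j) := by
    intro j hj
    have : j ≠ i := fun h => hi (h ▸ hj)
    simp [X, x, this]
  have hXi : X i = fun y => u (y i) := by simp [X, x]
  let S : (Fin n → 𝓨) → ℝ := ∑ j ∈ A, X j
  have hS : ∀ y, S y = ∑ j ∈ A, g (y j) := fun y => by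
    simp only [S, Finset.sum_apply]
    exact Finset.sum_congr rfl fun j hj => by rw [hXj j hj]
  have hSm : Measurable S := by
    rw [funext hS]; exact (BddMeas.sum A heg).1
  have hSmean : ∫ y, S y ∂(Measure.pi Q) = A.card * c := by
    simp_rw [hS]
    rw [integral_finsetSum _ fun j _ => (heg j).integrable]
    rw [Finset.sum_congr rfl fun j hj => (hev g hg j).trans (hc j hj)]
    simp
  have hSvar : ∫ y, (A.card * c - S y) ^ 2 ∂(Measure.pi Q) ≤ A.card * c := by
    have e1 : ∫ y, (A.card * c - S y) ^ 2 ∂(Measure.pi Q) = Var[S; Measure.pi Q] := by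
      rw [variance_eq_integral hSm.aemeasurable, hSmean]
      exact integral_congr_ae (ae_of_all _ fun y => by ring)
    rw [e1, IndepFun.variance_sum]
    · calc ∑ j ∈ A, Var[X j; Measure.pi Q] ≤ ∑ j ∈ A, c := by
            refine Finset.sum_le_sum fun j hj => ?_
            rw [hXj j hj]
            refine (variance_le_expectation_sq (heg j).1.aestronglyMeasurable).trans ?_
            rw [← hc j hj, ← hev g hg j]
            refine integral_mono (heg j).sq.integrable (heg j).integrable fun y => ?_
            have := hg1 (y j)
            simp only [Pi.pow_apply]
            nlinarith [this.1, this.2]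
        _ = A.card * c := by simp
    · intro j hj
      rw [hXj j hj]
      exact (heg j).memLp
    · intro j _ k _ hjk
      exact hind.indepFun hjk
  have hI : IndepFun S (X i) (Measure.pi Q) := hind.indepFun_finsetSum_of_notMem hX hi
  have hI2 : IndepFun (fun y => (u (y i)) ^ 2) (fun y => (A.card * c - S y) ^ 2)
      (Measure.pi Q) := by
    have := (hI.comp (φ := fun r => (A.card * c - r) ^ 2) (ψ := fun r => r ^ 2)
      (by fun_prop) (by fun_prop)).symm
    rwa [hXi] at this
  have e : ∫ y, (u (y i) * (A.card * c - ∑ j ∈ A, g (y j))) ^ 2 ∂(Measure.pi Q)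
      = (∫ y, (u (y i)) ^ 2 ∂(Measure.pi Q)) * ∫ y, (A.card * c - S y) ^ 2 ∂(Measure.pi Q) := by
    rw [← hI2.integral_fun_mul_eq_mul_integral]
    · simp_rw [← hS, mul_pow]
    · exact ((hub.comp (measurable_pi_apply i)).sq).1.aestronglyMeasurable
    · exact ((measurable_const.sub hSm).pow_const 2).aestronglyMeasurable
  rw [e]
  refine mul_le_mul ?_ hSvar (integral_nonneg fun _ => sq_nonneg _)
    (integral_nonneg fun y => (hu1 y).1)
  rw [← hev u hu i]
  refine integral_mono (hub.comp (measurable_pi_apply i)).sq.integrable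
    (hub.comp (measurable_pi_apply i)).integrable fun y => ?_
  have := hu1 (y i)
  simp only
  nlinarith [this.1, this.2]

/-- `g` is a probability density with respect to `ν`. -/
def IsDens {𝓨 : Type*} [MeasurableSpace 𝓨] (ν : Measure 𝓨) (g : 𝓨 → ℝ) : Prop :=
  Measurable g ∧ (∀ y, 0 ≤ g y) ∧ ∫⁻ y, ENNReal.ofReal (g y) ∂ν = 1

/-! ### The random-permutation model -/

section Model

variable {𝓨 : Type*} [MeasurableSpace 𝓨] {ν : Measure 𝓨} {n : ℕ} {f : Fin n → 𝓨 → ℝ}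

lemma isProbabilityMeasure_prodDens (hf : ∀ i, IsDens ν (f i)) :
    IsProbabilityMeasure (prodDens ν f) := by
  have := fun i => isProbabilityMeasure_dens (hf i).2.2
  unfold prodDens
  infer_instance

lemma isProbabilityMeasure_bayesP (hf : ∀ i, IsDens ν (f i)) :
    IsProbabilityMeasure (bayesP ν f) := by
  have := fun π : Equiv.Perm (Fin n) => isProbabilityMeasure_prodDens fun i => hf (π i)
  refine ⟨?_⟩
  have hn : (Nat.factorial n : ℝ≥0∞) ≠ 0 := by exact_mod_cast Nat.factorial_ne_zero n
  simp [bayesP, Fintype.card_perm, ENNReal.inv_mul_cancel hn (ENNReal.natCast_ne_top _)]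

lemma integral_bayesP (hf : ∀ i, IsDens ν (f i))
    {F : Equiv.Perm (Fin n) × (Fin n → 𝓨) → ℝ} (hF : BddMeas F) :
    ∫ ω, F ω ∂(bayesP ν f)
      = (Nat.factorial n : ℝ)⁻¹ * ∑ π, ∫ y, F (π, y) ∂(prodDens ν fun i => f (π i)) := by
  have := fun π : Equiv.Perm (Fin n) => isProbabilityMeasure_prodDens fun i => hf (π i)
  unfold bayesP
  rw [integral_smul_measure, integral_finsetSum_measure fun π _ => hF.integrable]
  simp only [ENNReal.toReal_inv, ENNReal.toReal_natCast, smul_eq_mul]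
  congr 1
  refine Finset.sum_congr rfl fun π _ => ?_
  rw [Measure.dirac_prod, integral_map measurable_prodMk_left.aemeasurable
    hF.1.aestronglyMeasurable]

/-- Interchanging the parameters of coordinates `i` and `j` of the product law, provided the
integrand compensates for the likelihood ratio of the two product densities. -/
lemma setIntegral_prodDens_swap [SigmaFinite ν] (hf : ∀ i, IsDens ν (f i)) (s t : 𝓨 → ℝ)
    (π : Equiv.Perm (Fin n)) {i j : Fin n} (hij : i ≠ j)
    (hst : ∀ y y', f (π i) y * f (π j) y' * (s y * t y')
      = f (π j) y * f (π i) y' * (t y * s y'))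
    {B : Set (Fin n → 𝓨)} (hB : MeasurableSet B) :
    ∫ y in B, s (y i) * t (y j) ∂(prodDens ν fun l => f (π l))
      = ∫ y in B, t (y i) * s (y j) ∂(prodDens ν fun l => f ((π * Equiv.swap i j) l)) := by
  have key : ∀ (π : Equiv.Perm (Fin n)) (g : (Fin n → 𝓨) → ℝ),
      ∫ y in B, g y ∂(prodDens ν fun l => f (π l))
        = ∫ y in B, (∏ l, f (π l) (y l)) * g y ∂(Measure.pi fun _ => ν) := by
    intro π g
    rw [prodDens_eq_withDensity ν _ (fun l => (hf (π l)).1) (fun l => (hf (π l)).2.1)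
      (fun l => (hf (π l)).2.2), setIntegral_withDensity_eq_setIntegral_toReal_smul _ _ _ hB]
    · refine integral_congr_ae (ae_of_all _ fun y => ?_)
      simp only [smul_eq_mul]
      rw [ENNReal.toReal_ofReal (Finset.prod_nonneg fun l _ => (hf (π l)).2.1 _)]
    · exact (Finset.measurable_fun_prod _ fun l _ =>
        (hf (π l)).1.comp (measurable_pi_apply l)).ennreal_ofReal
    · exact ae_of_all _ fun _ => ENNReal.ofReal_lt_top
  rw [key, key]
  refine integral_congr_ae (ae_of_all _ fun y => ?_)
  have split : ∀ π : Equiv.Perm (Fin n), ∏ l, f (π l) (y l)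
      = f (π i) (y i) * (f (π j) (y j) * ∏ l ∈ (Finset.univ.erase i).erase j, f (π l) (y l)) := by
    intro π
    rw [← Finset.mul_prod_erase Finset.univ _ (Finset.mem_univ i),
      ← Finset.mul_prod_erase (Finset.univ.erase i) _ (by simp [hij.symm] : j ∈ _)]
  have rest : ∏ l ∈ (Finset.univ.erase i).erase j, f ((π * Equiv.swap i j) l) (y l)
      = ∏ l ∈ (Finset.univ.erase i).erase j, f (π l) (y l) := by
    refine Finset.prod_congr rfl fun l hl => ?_
    simp only [Finset.mem_erase] at hl
    rw [Equiv.Perm.mul_apply, Equiv.swap_apply_of_ne_of_ne hl.2.1 hl.1]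
  simp only
  rw [split, split, rest]
  simp only [Equiv.Perm.mul_apply, Equiv.swap_apply_left, Equiv.swap_apply_right]
  linear_combination (∏ l ∈ (Finset.univ.erase i).erase j, f (π l) (y l)) * hst (y i) (y j)

lemma sigmaY_le : sigmaY 𝓨 n ≤ Prod.instMeasurableSpace := measurable_snd.comap_le

lemma sigmaYi_le (i : Fin n) : sigmaYi 𝓨 i ≤ sigmaY 𝓨 n := by
  have : Measurable[sigmaY 𝓨 n] (fun ω : Equiv.Perm (Fin n) × (Fin n → 𝓨) => ω.2 i) :=
    (measurable_pi_apply i).comp (comap_measurable _)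
  exact this.comap_le

lemma measurable_Mpar (μs : Fin n → ℝ) (i : Fin n) :
    Measurable (Mpar (𝓨 := 𝓨) μs i) := by
  have : Measurable (fun π : Equiv.Perm (Fin n) => μs (π i)) := fun _ _ => trivial
  exact this.comp measurable_fst

end Model

/-! ### Two-valued parameters and one-coordinate posteriors -/

section TwoPoint

variable {𝓨 : Type*} [MeasurableSpace 𝓨] {ν : Measure 𝓨} {n : ℕ} {f0 f1 : 𝓨 → ℝ}
  {μs : Fin n → ℝ}

/-- The density attached to each index by the two-valued parameter `μs`. -/
abbrev dens (f0 f1 : 𝓨 → ℝ) (μs : Fin n → ℝ) : Fin n → 𝓨 → ℝ :=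
  fun j y => if μs j = 1 then f1 y else f0 y

/-- The number of indices with parameter `1`. -/
abbrev num1 (μs : Fin n → ℝ) : ℝ := ((Finset.univ.filter fun j => μs j = 1).card : ℝ)

/-- The number of indices with parameter different from `1`. -/
abbrev num0 (μs : Fin n → ℝ) : ℝ := ((Finset.univ.filter fun j => ¬ μs j = 1).card : ℝ)

/-- `s` and `t` are the posterior probabilities of the parameters `1` and `0` given a single
observation: they are `[0,1]`-valued, sum to `1`, and satisfy Bayes' rule in the form
`n₁ f₁ t = n₀ f₀ s`, which leaves them free where both densities vanish. -/
structure IsPosterior (f0 f1 : 𝓨 → ℝ) (μs : Fin n → ℝ) (s t : 𝓨 → ℝ) : Prop where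
  meas_s : Measurable s
  meas_t : Measurable t
  mem_s : ∀ y, s y ∈ Set.Icc (0 : ℝ) 1
  mem_t : ∀ y, t y ∈ Set.Icc (0 : ℝ) 1
  add_eq : ∀ y, s y + t y = 1
  bayes : ∀ y, num1 μs * (f1 y * t y) = num0 μs * (f0 y * s y)

lemma exists_isPosterior (h0 : IsDens ν f0) (h1 : IsDens ν f1) (μs : Fin n → ℝ) :
    ∃ s t, IsPosterior f0 f1 μs s t := by
  have ha : ∀ y, 0 ≤ num1 μs * f1 y := fun y => mul_nonneg (Nat.cast_nonneg _) (h1.2.1 y)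
  have hb : ∀ y, 0 ≤ num0 μs * f0 y := fun y => mul_nonneg (Nat.cast_nonneg _) (h0.2.1 y)
  let s : 𝓨 → ℝ := fun y => num1 μs * f1 y / (num1 μs * f1 y + num0 μs * f0 y)
  have hs : Measurable s := (h1.1.const_mul _).div ((h1.1.const_mul _).add (h0.1.const_mul _))
  have hs1 : ∀ y, s y ∈ Set.Icc (0 : ℝ) 1 := fun y =>
    ⟨div_nonneg (ha y) (add_nonneg (ha y) (hb y)),
      div_le_one_of_le₀ (by linarith [hb y]) (add_nonneg (ha y) (hb y))⟩
  refine ⟨s, fun y => 1 - s y, hs, measurable_const.sub hs, hs1,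
    fun y => ⟨by linarith [(hs1 y).2], by linarith [(hs1 y).1]⟩, fun y => by ring, fun y => ?_⟩
  have : s y * (num1 μs * f1 y + num0 μs * f0 y) = num1 μs * f1 y := by
    by_cases h : num1 μs * f1 y + num0 μs * f0 y = 0
    · have : num1 μs * f1 y = 0 := by linarith [ha y, hb y]
      rw [h, this, mul_zero]
    · exact div_mul_cancel₀ _ h
  linear_combination -this

lemma isDens_dens (h0 : IsDens ν f0) (h1 : IsDens ν f1) (j : Fin n) :
    IsDens ν (dens f0 f1 μs j) := by
  by_cases h : μs j = 1
  · rwa [show dens f0 f1 μs j = f1 from funext fun y => if_pos h]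
  · rwa [show dens f0 f1 μs j = f0 from funext fun y => if_neg h]

lemma card_filter_perm (p : Fin n → Prop) [DecidablePred p] (π : Equiv.Perm (Fin n)) :
    (Finset.univ.filter fun i => p (π i)).card = (Finset.univ.filter p).card :=
  Finset.card_bij (fun i _ => π i) (by simp) (by simp) fun b hb => ⟨π.symm b, by simpa using hb⟩

/-- Averaging over the random permutation: if, for each permutation, the `i`-th integrand
integrates to at most `a` or `b` according to the value of `M i`, the sum is at most
`n₀ a + n₁ b`. -/
lemma sum_integral_bayesP_le (h0 : IsDens ν f0) (h1 : IsDens ν f1)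
    {G : Fin n → Equiv.Perm (Fin n) × (Fin n → 𝓨) → ℝ} (hG : ∀ i, BddMeas (G i)) {a b : ℝ}
    (ha : ∀ π i, ¬ μs (π i) = 1 →
      ∫ y, G i (π, y) ∂(prodDens ν fun l => dens f0 f1 μs (π l)) ≤ a)
    (hb : ∀ π i, μs (π i) = 1 →
      ∫ y, G i (π, y) ∂(prodDens ν fun l => dens f0 f1 μs (π l)) ≤ b) :
    ∑ i, ∫ ω, G i ω ∂(bayesP ν (dens f0 f1 μs)) ≤ num0 μs * a + num1 μs * b := by
  simp_rw [integral_bayesP (isDens_dens h0 h1) (hG _), ← Finset.mul_sum]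
  rw [Finset.sum_comm, inv_mul_le_iff₀ (by exact_mod_cast Nat.factorial_pos n)]
  calc _ ≤ ∑ π : Equiv.Perm (Fin n), (num0 μs * a + num1 μs * b) := by
        refine Finset.sum_le_sum fun π _ => ?_
        calc _ ≤ ∑ i, (if μs (π i) = 1 then b else a) := by
              refine Finset.sum_le_sum fun i _ => ?_
              split_ifs with h
              · exact hb π i h
              · exact ha π i h
          _ = num0 μs * a + num1 μs * b := by
              rw [Finset.sum_ite, Finset.sum_const, Finset.sum_const,
                card_filter_perm (fun j => μs j = 1), card_filter_perm (fun j => ¬ μs j = 1)]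
              simp only [nsmul_eq_mul]
              ring
    _ = _ := by simp [Fintype.card_perm]; ring

/-! ### The exchange identity -/

/-- The contribution of a pair of indices `i`, `j` to the exchange identity. -/
def exch (μs : Fin n → ℝ) (s t : 𝓨 → ℝ) (i j : Fin n)
    (ω : Equiv.Perm (Fin n) × (Fin n → 𝓨)) : ℝ :=
  s (ω.2 i) * (1 - Mpar μs i ω) * (Mpar μs j ω * t (ω.2 j))
    - t (ω.2 i) * Mpar μs i ω * ((1 - Mpar μs j ω) * s (ω.2 j))

variable {s t : 𝓨 → ℝ}

lemma bddMeas_Mpar (hμ : ∀ i, μs i = 0 ∨ μs i = 1) (i : Fin n) :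
    BddMeas (Mpar (𝓨 := 𝓨) μs i) :=
  .of_mem_Icc (measurable_Mpar μs i) fun ω => by
    rcases hμ (ω.1 i) with h | h <;> simp [Mpar, h]

lemma IsPosterior.bddMeas_s (h : IsPosterior f0 f1 μs s t) (i : Fin n) :
    BddMeas (fun ω : Equiv.Perm (Fin n) × (Fin n → 𝓨) => s (ω.2 i)) :=
  (BddMeas.of_mem_Icc h.meas_s h.mem_s).comp ((measurable_pi_apply i).comp measurable_snd)

lemma IsPosterior.bddMeas_t (h : IsPosterior f0 f1 μs s t) (i : Fin n) :
    BddMeas (fun ω : Equiv.Perm (Fin n) × (Fin n → 𝓨) => t (ω.2 i)) :=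
  (BddMeas.of_mem_Icc h.meas_t h.mem_t).comp ((measurable_pi_apply i).comp measurable_snd)

lemma bddMeas_exch (hμ : ∀ i, μs i = 0 ∨ μs i = 1) (h : IsPosterior f0 f1 μs s t)
    (i j : Fin n) : BddMeas (exch μs s t i j) := by
  have hM := bddMeas_Mpar (𝓨 := 𝓨) hμ
  exact (((h.bddMeas_s i).mul ((BddMeas.const 1).sub (hM i))).mul ((hM j).mul (h.bddMeas_t j))).sub
    (((h.bddMeas_t i).mul (hM i)).mul (((BddMeas.const 1).sub (hM j)).mul (h.bddMeas_s j)))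

/-- The exchange identity: swapping the labels of `i` and `j` gives
`E[s(Y_i) t(Y_j) 1{M_i = 0, M_j = 1} | Y] = E[t(Y_i) s(Y_j) 1{M_i = 1, M_j = 0} | Y]`. -/
lemma condExp_exch [SigmaFinite ν] (h0 : IsDens ν f0) (h1 : IsDens ν f1)
    (hμ : ∀ i, μs i = 0 ∨ μs i = 1) (h : IsPosterior f0 f1 μs s t) (i j : Fin n) :
    (bayesP ν (dens f0 f1 μs))[exch μs s t i j|sigmaY 𝓨 n] =ᵐ[bayesP ν (dens f0 f1 μs)] 0 := by
  by_cases hij : i = j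
  · subst hij
    have : exch (𝓨 := 𝓨) μs s t i i = 0 := by
      funext ω
      simp only [exch, Pi.zero_apply]
      ring
    rw [this, condExp_zero]
  have hf := isDens_dens (μs := μs) h0 h1
  have := isProbabilityMeasure_bayesP hf
  have := fun π : Equiv.Perm (Fin n) => isProbabilityMeasure_prodDens fun i => hf (π i)
  have hE := bddMeas_exch hμ h i j
  symm
  refine ae_eq_condExp_of_forall_setIntegral_eq sigmaY_le hE.integrable
    (fun _ _ _ => integrableOn_zero) ?_ aestronglyMeasurable_zero
  rintro S ⟨B, hB, rfl⟩ -
  have hS : MeasurableSet (Prod.snd ⁻¹' B : Set (Equiv.Perm (Fin n) × (Fin n → 𝓨))) :=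
    measurable_snd hB
  simp only [Pi.zero_apply, integral_zero]
  rw [← integral_indicator hS, integral_bayesP hf (hE.indicator hS)]
  let a : Equiv.Perm (Fin n) → ℝ := fun π => if μs (π i) = 0 ∧ μs (π j) = 1 then
    ∫ y in B, s (y i) * t (y j) ∂(prodDens ν fun l => dens f0 f1 μs (π l)) else 0
  let b : Equiv.Perm (Fin n) → ℝ := fun π => if μs (π j) = 0 ∧ μs (π i) = 1 then
    ∫ y in B, t (y i) * s (y j) ∂(prodDens ν fun l => dens f0 f1 μs (π l)) else 0
  have hab : ∀ π, ∫ y, (Prod.snd ⁻¹' B : Set (Equiv.Perm (Fin n) × (Fin n → 𝓨))).indicator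
      (exch μs s t i j) (π, y) ∂(prodDens ν fun l => dens f0 f1 μs (π l)) = a π - b π := by
    intro π
    have : ∀ y, (Prod.snd ⁻¹' B : Set (Equiv.Perm (Fin n) × (Fin n → 𝓨))).indicator
      (exch μs s t i j) (π, y) = B.indicator (fun y => exch μs s t i j (π, y)) y := fun y => rfl
    simp_rw [this]
    rw [integral_indicator hB]
    rcases hμ (π i) with hi | hi <;> rcases hμ (π j) with hj | hj <;>
      simp [a, b, exch, Mpar, hi, hj, integral_neg]
  have hsw : ∀ π, a π = b (π * Equiv.swap i j) := by
    intro π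
    simp only [a, b, Equiv.Perm.mul_apply, Equiv.swap_apply_left, Equiv.swap_apply_right]
    split_ifs with hc
    swap
    · rfl
    have hi : ¬ μs (π i) = 1 := by rw [hc.1]; norm_num
    refine setIntegral_prodDens_swap hf s t π hij (fun y y' => ?_) hB
    -- both counts are positive, so the two instances of Bayes' rule may be multiplied and cancelled
    have n1 : 0 < num1 μs := by
      exact_mod_cast Finset.card_pos.2 ⟨π j, by simp [hc.2]⟩
    have n0 : 0 < num0 μs := by
      exact_mod_cast Finset.card_pos.2 ⟨π i, by simp [hi]⟩
    simp only [dens, hc.2, hi, if_true, if_false]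
    refine mul_left_cancel₀ (mul_pos n1 n0).ne' ?_
    linear_combination num0 μs * f0 y * s y * h.bayes y' - num0 μs * f0 y' * s y' * h.bayes y
  simp_rw [hab]
  have hre := Equiv.sum_comp (Equiv.mulRight (Equiv.swap i j)) b
  simp only [Equiv.coe_mulRight] at hre
  rw [Finset.sum_sub_distrib, Finset.sum_congr rfl fun π _ => hsw π, hre, sub_self, mul_zero]

/-- `n₁ E₁ t(Y) = n₀ E₀ s(Y)`. -/
lemma IsPosterior.integral_bayes (h0 : IsDens ν f0) (h1 : IsDens ν f1)
    (h : IsPosterior f0 f1 μs s t) :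
    num1 μs * ∫ y, t y ∂(ν.withDensity fun y => ENNReal.ofReal (f1 y))
      = num0 μs * ∫ y, s y ∂(ν.withDensity fun y => ENNReal.ofReal (f0 y)) := by
  have key : ∀ (g u : 𝓨 → ℝ), IsDens ν g →
      ∫ y, u y ∂(ν.withDensity fun y => ENNReal.ofReal (g y)) = ∫ y, g y * u y ∂ν := by
    intro g u hg
    rw [integral_withDensity_eq_integral_toReal_smul hg.1.ennreal_ofReal
      (ae_of_all _ fun _ => ENNReal.ofReal_lt_top)]
    simp_rw [ENNReal.toReal_ofReal (hg.2.1 _), smul_eq_mul]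
  rw [key f1 t h1, key f0 s h0, ← integral_const_mul, ← integral_const_mul]
  simp_rw [h.bayes]

/-! ### The main estimate -/

/-- The total squared distance from the one-coordinate posteriors `s(Y_i)` to the full posteriors
is at most `2`. -/
lemma sum_integral_condExp_sq_le [SigmaFinite ν] (h0 : IsDens ν f0) (h1 : IsDens ν f1)
    (hμ : ∀ i, μs i = 0 ∨ μs i = 1) (h : IsPosterior f0 f1 μs s t) :
    ∑ i, ∫ ω, ((bayesP ν (dens f0 f1 μs))[fun ω => s (ω.2 i) - Mpar μs i ω|sigmaY 𝓨 n]) ω ^ 2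
      ∂(bayesP ν (dens f0 f1 μs)) ≤ 2 := by
  have hf := isDens_dens (μs := μs) h0 h1
  have := isProbabilityMeasure_bayesP hf
  have hprob := fun i => isProbabilityMeasure_dens (hf i).2.2
  have hM := bddMeas_Mpar (𝓨 := 𝓨) hμ
  set P := bayesP ν (dens f0 f1 μs) with hP
  set c1 := ∫ y, t y ∂(ν.withDensity fun y => ENNReal.ofReal (f1 y)) with hc1
  set c0 := ∫ y, s y ∂(ν.withDensity fun y => ENNReal.ofReal (f0 y)) with hc0
  have hbal : num1 μs * c1 = num0 μs * c0 := h.integral_bayes h0 h1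
  set H := num1 μs * c1 with hH
  -- conditional expectation is an `L²` contraction
  have contr : ∀ {X : Equiv.Perm (Fin n) × (Fin n → 𝓨) → ℝ}, BddMeas X →
      ∫ ω, (P[X|sigmaY 𝓨 n]) ω ^ 2 ∂P ≤ ∫ ω, X ω ^ 2 ∂P := by
    intro X hX
    have e := integral_sub_condExp_sq (sigmaY_le (𝓨 := 𝓨) (n := n)) (P := P) hX.memLp
    have : 0 ≤ ∫ ω, (X ω - (P[X|sigmaY 𝓨 n]) ω) ^ 2 ∂P := integral_nonneg fun _ => sq_nonneg _
    linarith
  have hD : ∀ i, BddMeas (fun ω => s (ω.2 i) - Mpar (𝓨 := 𝓨) μs i ω) := fun i =>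
    (h.bddMeas_s i).sub (hM i)
  have hdens1 : ∀ {j : Fin n}, μs j = 1 → dens f0 f1 μs j = f1 := fun hj => by
    funext y; simp [dens, hj]
  have hdens0 : ∀ {j : Fin n}, ¬ μs j = 1 → dens f0 f1 μs j = f0 := fun hj => by
    funext y; simp [dens, hj]
  by_cases hH0 : H = 0
  · -- in the degenerate case `s(Y_i) = M_i` almost surely
    have hev : ∀ (π : Equiv.Perm (Fin n)) (i : Fin n) (u : 𝓨 → ℝ), Measurable u →
        (∀ y, u y ∈ Set.Icc (0 : ℝ) 1) →
        ∫ y, (u (y i)) ^ 2 ∂(prodDens ν fun l => dens f0 f1 μs (π l))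
          ≤ ∫ y, u y ∂(ν.withDensity fun y => ENNReal.ofReal (dens f0 f1 μs (π i) y)) := by
      intro π i u hu hu1
      have hub := BddMeas.of_mem_Icc hu hu1
      unfold prodDens
      rw [integral_comp_eval (μ := fun i => ν.withDensity fun y =>
        ENNReal.ofReal (dens f0 f1 μs (π i) y)) (f := fun y => u y ^ 2)
        hub.sq.1.aestronglyMeasurable]
      refine integral_mono hub.sq.integrable hub.integrable fun y => ?_
      have := hu1 y
      simp only
      nlinarith [this.1, this.2]
    have := sum_integral_bayesP_le (μs := μs) h0 h1 (fun i => (hD i).sq) (a := c0) (b := c1)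
      (fun π i hi => by
        have h0' : μs (π i) = 0 := (hμ (π i)).resolve_right hi
        have e := hev π i s h.meas_s h.mem_s
        rw [hdens0 hi] at e
        simpa only [Mpar, h0', sub_zero] using e)
      (fun π i hi => by
        have e := hev π i t h.meas_t h.mem_t
        rw [hdens1 hi] at e
        have e2 : ∀ y : Fin n → 𝓨, (s (y i) - 1) ^ 2 = t (y i) ^ 2 := fun y => by
          have : s (y i) - 1 = - t (y i) := by linarith [h.add_eq (y i)]
          rw [this, neg_sq]
        simpa only [Mpar, hi, e2] using e)
    calc _ ≤ ∑ i, ∫ ω, (s (ω.2 i) - Mpar μs i ω) ^ 2 ∂P :=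
          Finset.sum_le_sum fun i _ => contr (hD i)
      _ ≤ 2 := by linarith
  -- `W i` has conditional expectation `H` times that of `s(Y_i) - M_i`, but a small second moment
  let W : Fin n → Equiv.Perm (Fin n) × (Fin n → 𝓨) → ℝ := fun i ω =>
    H * (s (ω.2 i) - Mpar μs i ω) - ∑ j, exch μs s t i j ω
  have hW : ∀ i, BddMeas (W i) := fun i =>
    ((BddMeas.const H).mul (hD i)).sub (BddMeas.sum _ fun j => bddMeas_exch hμ h i j)
  have hWc : ∀ i, ∀ᵐ ω ∂P, (P[W i|sigmaY 𝓨 n]) ω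
      = H * (P[fun ω => s (ω.2 i) - Mpar μs i ω|sigmaY 𝓨 n]) ω := by
    intro i
    have e1 := condExp_sub (m := sigmaY 𝓨 n) (μ := P)
      ((BddMeas.const H).mul (hD i)).integrable
      (BddMeas.sum Finset.univ fun j => bddMeas_exch hμ h i j).integrable
    have e2 := condExp_smul (μ := P) H (fun ω => s (ω.2 i) - Mpar (𝓨 := 𝓨) μs i ω) (sigmaY 𝓨 n)
    have e3 := condExp_finsetSum (μ := P) (s := Finset.univ) (f := fun j => exch μs s t i j)
      (fun j _ => (bddMeas_exch hμ h i j).integrable) (sigmaY 𝓨 n)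
    have e4 : ∀ᵐ ω ∂P, ∀ j, (P[exch μs s t i j|sigmaY 𝓨 n]) ω = 0 :=
      ae_all_iff.2 fun j => condExp_exch h0 h1 hμ h i j
    have e5 : (fun ω => ∑ j, exch μs s t i j ω) = ∑ j, exch (𝓨 := 𝓨) μs s t i j := by
      funext ω; simp
    rw [e5] at e1
    filter_upwards [e1, e2, e3, e4] with ω g1 g2 g3 g4
    have hWi : W i = (fun ω => H * (s (ω.2 i) - Mpar μs i ω)) - ∑ j, exch μs s t i j := by
      funext ω; simp [W]
    rw [hWi, g1, Pi.sub_apply, g3, Finset.sum_apply, Finset.sum_eq_zero fun j _ => g4 j, sub_zero]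
    exact g2
  have hWeq : ∀ i π y, W i (π, y)
      = s (y i) * (1 - μs (π i)) * (H - ∑ j, μs (π j) * t (y j))
        - t (y i) * μs (π i) * (H - ∑ j, (1 - μs (π j)) * s (y j)) := by
    intro i π y
    simp only [W, exch, Mpar, Finset.sum_sub_distrib, ← Finset.mul_sum]
    linear_combination (H * μs (π i)) * h.add_eq (y i)
  have hsum := sum_integral_bayesP_le (μs := μs) h0 h1 (fun i => (hW i).sq)
    (a := c0 * H) (b := c1 * H)
    (fun π i hi => by
      have h0' : μs (π i) = 0 := (hμ (π i)).resolve_right hi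
      have e := integral_sq_mul_centred_sum_le
        (fun l => ν.withDensity fun y => ENNReal.ofReal (dens f0 f1 μs (π l) y)) s t
        h.meas_s h.meas_t h.mem_s h.mem_t i (Finset.univ.filter fun j => μs (π j) = 1)
        (by simpa using hi) c1
        (fun j hj => by rw [hdens1 (Finset.mem_filter.1 hj).2])
      rw [hdens0 hi, card_filter_perm (fun j => μs j = 1)] at e
      refine le_of_eq_of_le ?_ e
      refine integral_congr_ae (ae_of_all _ fun y => ?_)
      simp only
      rw [hWeq, h0', Finset.sum_filter]
      have : ∀ j, μs (π j) * t (y j) = if μs (π j) = 1 then t (y j) else 0 := fun j => by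
        rcases hμ (π j) with hj | hj <;> simp [hj]
      simp only [this]
      ring)
    (fun π i hi => by
      have e := integral_sq_mul_centred_sum_le
        (fun l => ν.withDensity fun y => ENNReal.ofReal (dens f0 f1 μs (π l) y)) t s
        h.meas_t h.meas_s h.mem_t h.mem_s i (Finset.univ.filter fun j => ¬ μs (π j) = 1)
        (by simpa using hi) c0
        (fun j hj => by rw [hdens0 (Finset.mem_filter.1 hj).2])
      rw [hdens1 hi, card_filter_perm (fun j => ¬ μs j = 1)] at e
      rw [hbal]
      refine le_of_eq_of_le ?_ e
      refine integral_congr_ae (ae_of_all _ fun y => ?_)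
      simp only
      rw [hWeq, hi, hbal, Finset.sum_filter]
      have : ∀ j, (1 - μs (π j)) * s (y j) = if ¬ μs (π j) = 1 then s (y j) else 0 := fun j => by
        rcases hμ (π j) with hj | hj <;> simp [hj]
      simp only [this]
      ring)
  have hfin : H ^ 2 * ∑ i, ∫ ω, (P[fun ω => s (ω.2 i) - Mpar μs i ω|sigmaY 𝓨 n]) ω ^ 2 ∂P
      ≤ H ^ 2 * 2 := by
    calc _ = ∑ i, ∫ ω, (P[W i|sigmaY 𝓨 n]) ω ^ 2 ∂P := by
          rw [Finset.mul_sum]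
          refine Finset.sum_congr rfl fun i _ => ?_
          rw [← integral_const_mul]
          refine integral_congr_ae ?_
          filter_upwards [hWc i] with ω hω
          rw [hω]; ring
      _ ≤ ∑ i, ∫ ω, W i ω ^ 2 ∂P := Finset.sum_le_sum fun i _ => contr (hW i)
      _ ≤ num0 μs * (c0 * H) + num1 μs * (c1 * H) := hsum
      _ = H ^ 2 * 2 := by
          rw [hH] at hbal ⊢
          linear_combination -(num1 μs * c1) * hbal
  exact le_of_mul_le_mul_left hfin (by positivity)

end TwoPoint

/-! ### Conclusion -/

/-- two-valued parameter, symmetric moment condition.  If the likelihood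
ratio `f_{1−m}/f_m` has variance at most `σ²` under `f_m` for both `m = 0, 1`, then there
is a constant `C = C(σ²)`, independent of `n` and of `μ_{1:n} ∈ {0,1}ⁿ`, with
`E Σ_i (E(M_i|Y_i) − E(M_i|Y_{1:n}))² ≤ C`. -/
theorem stmt_4 (σ2 : ℝ) (hσ2 : 0 ≤ σ2) :
    ∃ C : ℝ, ∀ (𝓨 : Type) [MeasurableSpace 𝓨] (ν : Measure 𝓨) [SigmaFinite ν]
      (f0 f1 : 𝓨 → ℝ), Measurable f0 → Measurable f1 →
      (∀ y, 0 ≤ f0 y) → (∀ y, 0 ≤ f1 y) →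
      (∫⁻ y, ENNReal.ofReal (f0 y) ∂ν = 1) → (∫⁻ y, ENNReal.ofReal (f1 y) ∂ν = 1) →
      evariance (fun y => f1 y / f0 y)
          (ν.withDensity fun y => ENNReal.ofReal (f0 y)) ≤ ENNReal.ofReal σ2 →
      evariance (fun y => f0 y / f1 y)
          (ν.withDensity fun y => ENNReal.ofReal (f1 y)) ≤ ENNReal.ofReal σ2 →
      ∀ (n : ℕ) (μs : Fin n → ℝ), (∀ i, μs i = 0 ∨ μs i = 1) →
        ∫ ω, ∑ i,
            (((bayesP ν (fun j y => if μs j = 1 then f1 y else f0 y))[Mpar μs i|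
                sigmaYi 𝓨 i]) ω
              - ((bayesP ν (fun j y => if μs j = 1 then f1 y else f0 y))[Mpar μs i|
                sigmaY 𝓨 n]) ω) ^ 2
          ∂(bayesP ν (fun j y => if μs j = 1 then f1 y else f0 y)) ≤ C := by
  refine ⟨2, ?_⟩
  intro 𝓨 _ ν _ f0 f1 hm0 hm1 hn0 hn1 hi0 hi1 _ _ n μs hμ
  have h0 : IsDens ν f0 := ⟨hm0, hn0, hi0⟩
  have h1 : IsDens ν f1 := ⟨hm1, hn1, hi1⟩
  obtain ⟨s, t, h⟩ := exists_isPosterior h0 h1 μs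
  have hf := isDens_dens (μs := μs) h0 h1
  change ∫ ω, ∑ i, (((bayesP ν (dens f0 f1 μs))[Mpar μs i|sigmaYi 𝓨 i]) ω
    - ((bayesP ν (dens f0 f1 μs))[Mpar μs i|sigmaY 𝓨 n]) ω) ^ 2
    ∂(bayesP ν (dens f0 f1 μs)) ≤ 2
  have := isProbabilityMeasure_bayesP hf
  set P := bayesP ν (dens f0 f1 μs) with hP
  have hM : ∀ i, MemLp (Mpar (𝓨 := 𝓨) μs i) 2 P := fun i => (bddMeas_Mpar hμ i).memLp
  rw [integral_finsetSum]
  · refine le_trans (Finset.sum_le_sum fun i _ => ?_) (sum_integral_condExp_sq_le h0 h1 hμ h)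
    exact integral_condExp_sub_condExp_sq_le (sigmaYi_le i) sigmaY_le
      (h.meas_s.comp (comap_measurable _)).stronglyMeasurable (h.bddMeas_s i).memLp (hM i)
  · intro i _
    exact (((hM i).condExp (by norm_num)).sub ((hM i).condExp (by norm_num))).integrable_sq
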